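/- Let α ∈ (0,1) and let φ : [0,∞) → [0,∞) be the monotone rearrangement of μ_1 onto μ_α, i.e. the increasing map satisfying e^{-x} = Z_α^{-1} ∫_{φ(x)}^{+∞} e^{-y^α} dy for all x ≥ 0, where Z_α = ∫_0^∞ e^{-y^α} dy. Then there is a constant K > 0 depending only on α such that for all x, y ∈ [0,+∞), | φ(x) − φ(y) | ≤ K · max( |x − y|, x^{1/α − 1} |x − y|, |x − y|^{1/α} ). -/

import Mathlib

open MeasureTheory Filter Topology

noncomputable section

/-- The normalizing constant `Z_α = ∫_0^∞ e^{-y^α} dy`. -/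
def Zalpha (α : ℝ) : ℝ := ∫ y in Set.Ioi (0 : ℝ), Real.exp (-y ^ α)

/-- The tail `∫_t^∞ e^{-y^α} dy`, extended to negative `t` by the fundamental theorem of calculus. -/
def expRpowTail (α t : ℝ) : ℝ := Zalpha α - ∫ y in (0 : ℝ)..t, Real.exp (-y ^ α)

theorem continuous_exp_neg_rpow {α : ℝ} (hα : 0 < α) :
    Continuous fun y : ℝ => Real.exp (-y ^ α) :=
  Real.continuous_exp.comp (Real.continuous_rpow_const hα.le).neg

theorem integrableOn_exp_neg_rpow_Ioi {α : ℝ} (hα : 0 < α) :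
    IntegrableOn (fun y : ℝ => Real.exp (-y ^ α)) (Set.Ioi 0) := by
  simpa using integrableOn_rpow_mul_exp_neg_rpow (p := α) (s := 0) (by norm_num) hα

theorem hasDerivAt_expRpowTail {α : ℝ} (hα : 0 < α) (t : ℝ) :
    HasDerivAt (expRpowTail α) (-Real.exp (-t ^ α)) t := by
  have hf := continuous_exp_neg_rpow hα
  exact (intervalIntegral.integral_hasDerivAt_right (hf.intervalIntegrable 0 t)
    hf.stronglyMeasurable.stronglyMeasurableAtFilter hf.continuousAt).const_sub (Zalpha α)

theorem tendsto_expRpowTail_atTop {α : ℝ} (hα : 0 < α) :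
    Tendsto (expRpowTail α) atTop (𝓝 0) := by
  have h := (intervalIntegral_tendsto_integral_Ioi 0 (integrableOn_exp_neg_rpow_Ioi hα)
    tendsto_id).const_sub (Zalpha α)
  rw [← Zalpha, sub_self] at h
  exact h

theorem expRpowTail_eq_integral_Ioi {α : ℝ} (hα : 0 < α) {t : ℝ} (ht : 0 ≤ t) :
    expRpowTail α t = ∫ y in Set.Ioi t, Real.exp (-y ^ α) := by
  have hi := integrableOn_exp_neg_rpow_Ioi hα
  have h := intervalIntegral.integral_interval_add_Ioi hi
    (hi.mono_set (Set.Ioi_subset_Ioi ht))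
  rw [expRpowTail, Zalpha, ← h]
  ring

theorem strictAnti_expRpowTail {α : ℝ} (hα : 0 < α) : StrictAnti (expRpowTail α) :=
  strictAnti_of_hasDerivAt_neg (hasDerivAt_expRpowTail hα)
    fun _ => neg_lt_zero.2 (Real.exp_pos _)

theorem expRpowTail_pos {α : ℝ} (hα : 0 < α) (t : ℝ) : 0 < expRpowTail α t :=
  ((strictAnti_expRpowTail hα).antitone.le_of_tendsto (tendsto_expRpowTail_atTop hα)
    (t + 1)).trans_lt (strictAnti_expRpowTail hα (lt_add_one t))

/-- The tail of `e^{-y^α}` is controlled by its asymptotic equivalent `t^{1-α} e^{-t^α}`, shifted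
away from the origin. -/
theorem exists_expRpowTail_le {α : ℝ} (hα0 : 0 < α) (hα1 : α < 1) :
    ∃ A > (0 : ℝ), ∀ t : ℝ, 0 ≤ t →
      expRpowTail α t ≤ 2 / α * (A + t) ^ (1 - α) * Real.exp (-t ^ α) := by
  obtain ⟨A, hAα, hA⟩ : ∃ A : ℝ, (1 - α) * A ^ (-α) < α / 2 ∧ 0 < A := by
    have h : Tendsto (fun A : ℝ => (1 - α) * A ^ (-α)) atTop (𝓝 ((1 - α) * 0)) :=
      (tendsto_rpow_neg_atTop hα0).const_mul _
    rw [mul_zero] at h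
    exact ((h.eventually_lt_const (by positivity : 0 < α / 2)).and (eventually_gt_atTop 0)).exists
  refine ⟨A, hA, fun t ht => ?_⟩
  set F : ℝ → ℝ := fun t => 2 / α * (A + t) ^ (1 - α) * Real.exp (-t ^ α)
  have hFcont : ContinuousOn F (Set.Ici 0) := by
    refine (continuousOn_const.mul (ContinuousOn.rpow_const (by fun_prop) ?_)).mul
      (continuous_exp_neg_rpow hα0).continuousOn
    intro s hs
    left
    have : 0 ≤ s := hs
    positivity
  have hFderiv : ∀ s : ℝ, 0 < s → HasDerivAt F
      (2 / α * (1 * (1 - α) * (A + s) ^ (1 - α - 1)) * Real.exp (-s ^ α) +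
        2 / α * (A + s) ^ (1 - α) * (Real.exp (-s ^ α) * -(α * s ^ (α - 1)))) s := by
    intro s hs
    have h₁ := (((hasDerivAt_id s).const_add A).rpow_const (p := 1 - α)
      (Or.inl (by simp only [id]; positivity))).const_mul (2 / α)
    exact h₁.mul (Real.hasDerivAt_rpow_const (p := α) (Or.inl hs.ne')).neg.exp
  have hmono : MonotoneOn (fun s => expRpowTail α s - F s) (Set.Ici 0) := by
    refine monotoneOn_of_hasDerivWithinAt_nonneg (convex_Ici 0)
      (ContinuousOn.sub (fun s _ =>
        (hasDerivAt_expRpowTail hα0 s).continuousAt.continuousWithinAt) hFcont)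
      (fun s hs => ((hasDerivAt_expRpowTail hα0 s).sub
        (hFderiv s (by simpa using hs))).hasDerivWithinAt) ?_
    intro s hs
    have hs : 0 < s := by simpa using hs
    have h₁ : (1 - α) * (A + s) ^ (1 - α - 1) ≤ α / 2 := by
      have : (A + s) ^ (-α) ≤ A ^ (-α) :=
        Real.rpow_le_rpow_of_nonpos hA (by linarith) (by linarith)
      rw [show 1 - α - 1 = -α by ring]
      nlinarith
    have h₂ : 1 ≤ (A + s) ^ (1 - α) * s ^ (α - 1) := by
      calc (1 : ℝ) = s ^ (1 - α) * s ^ (α - 1) := by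
            rw [← Real.rpow_add hs]; simp
        _ ≤ _ := by gcongr; linarith
    have h₃ : 0 ≤ 2 / α * Real.exp (-s ^ α) *
        (α * ((A + s) ^ (1 - α) * s ^ (α - 1) - 1) +
          (α / 2 - (1 - α) * (A + s) ^ (1 - α - 1))) :=
      mul_nonneg (by positivity)
        (add_nonneg (mul_nonneg hα0.le (sub_nonneg.2 h₂)) (sub_nonneg.2 h₁))
    have h₄ : 2 / α * (α / 2) = 1 := by field_simp
    linear_combination h₃ - Real.exp (-s ^ α) * h₄
  have hbound : ∀ᶠ R in atTop, expRpowTail α t - F t ≤ expRpowTail α R := by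
    filter_upwards [eventually_ge_atTop t] with R hR
    have hR0 : 0 ≤ R := ht.trans hR
    have h := hmono ht hR0 hR
    have hFR : 0 ≤ F R := by positivity
    simp only at h
    linarith
  exact sub_nonpos.1 (ge_of_tendsto (tendsto_expRpowTail_atTop hα0) hbound)

/-- In the coordinate `(A + t)^α`, the logarithm of the tail decreases at least linearly. -/
theorem exists_rpow_sub_rpow_le_log_expRpowTail {α : ℝ} (hα0 : 0 < α) (hα1 : α < 1) :
    ∃ A > (0 : ℝ), ∀ a b : ℝ, 0 ≤ a → a ≤ b →
      (A + b) ^ α - (A + a) ^ α ≤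
        2 * (Real.log (expRpowTail α a) - Real.log (expRpowTail α b)) := by
  obtain ⟨A, hA, htail⟩ := exists_expRpowTail_le hα0 hα1
  refine ⟨A, hA, fun a b ha hab => ?_⟩
  have hd : ∀ s : ℝ, 0 ≤ s → HasDerivAt
      (fun t => (A + t) ^ α + 2 * Real.log (expRpowTail α t))
      (1 * α * (A + s) ^ (α - 1) + 2 * (-Real.exp (-s ^ α) / expRpowTail α s)) s := by
    intro s hs
    exact (((hasDerivAt_id s).const_add A).rpow_const
      (Or.inl (by simp only [id]; positivity))).add
      (((hasDerivAt_expRpowTail hα0 s).log (expRpowTail_pos hα0 s).ne').const_mul 2)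
  have hanti : AntitoneOn (fun t => (A + t) ^ α + 2 * Real.log (expRpowTail α t))
      (Set.Ici 0) := by
    refine antitoneOn_of_hasDerivWithinAt_nonpos (convex_Ici 0)
      (fun s hs => (hd s hs).continuousAt.continuousWithinAt)
      (fun s hs => (hd s (interior_subset hs)).hasDerivWithinAt) ?_
    intro s hs
    have hs : 0 ≤ s := interior_subset hs
    have hpos := expRpowTail_pos hα0 s
    have hinv : (A + s) ^ (1 - α) * (A + s) ^ (α - 1) = 1 := by
      rw [← Real.rpow_add (by positivity)]; simp
    have h : α * (A + s) ^ (α - 1) ≤ 2 * Real.exp (-s ^ α) / expRpowTail α s := by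
      rw [le_div_iff₀ hpos]
      calc α * (A + s) ^ (α - 1) * expRpowTail α s
          ≤ α * (A + s) ^ (α - 1) * (2 / α * (A + s) ^ (1 - α) * Real.exp (-s ^ α)) := by
            gcongr; exact htail s hs
        _ = 2 * Real.exp (-s ^ α) * ((A + s) ^ (1 - α) * (A + s) ^ (α - 1)) := by
            field_simp
        _ = _ := by rw [hinv, mul_one]
    rw [neg_div, one_mul, mul_neg, ← mul_div_assoc]
    linarith
  have h := hanti ha (ha.trans hab) hab
  simp only at h
  linarith

/-- Mean value inequality for real powers with exponent at least one. -/
theorem rpow_sub_rpow_le_mul {q u v : ℝ} (hq : 1 ≤ q) (hu : 0 ≤ u) (huv : u ≤ v) :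
    v ^ q - u ^ q ≤ q * v ^ (q - 1) * (v - u) := by
  refine Convex.image_sub_le_mul_sub_of_deriv_le (convex_Icc u v)
    (Real.continuous_rpow_const (by linarith)).continuousOn
    (Real.differentiable_rpow_const hq).differentiableOn ?_ u
    (Set.left_mem_Icc.2 huv) v (Set.right_mem_Icc.2 huv) huv
  intro s hs
  have hs := interior_subset hs
  rw [(Real.hasDerivAt_rpow_const (Or.inr hq)).deriv]
  have h₀ : 0 ≤ s := hu.trans hs.1
  have := Real.rpow_le_rpow h₀ hs.2 (by linarith : 0 ≤ q - 1)
  gcongr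

theorem add_add_rpow_le {p a b c : ℝ} (hp : 0 ≤ p) (ha : 0 ≤ a) (hb : 0 ≤ b) (hc : 0 ≤ c) :
    (a + b + c) ^ p ≤ 3 ^ p * (a ^ p + b ^ p + c ^ p) := by
  have key : ∀ m : ℝ, 0 ≤ m → a ≤ m → b ≤ m → c ≤ m → (a + b + c) ^ p ≤ 3 ^ p * m ^ p := by
    intro m hm h₁ h₂ h₃
    rw [← Real.mul_rpow (by norm_num) hm]
    exact Real.rpow_le_rpow (by positivity) (by linarith) hp
  have h₁ := Real.rpow_nonneg ha p
  have h₂ := Real.rpow_nonneg hb p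
  have h₃ := Real.rpow_nonneg hc p
  rcases le_total a b with hab | hab <;> rcases le_total b c with hbc | hbc <;>
    rcases le_total a c with hac | hac
  all_goals first
    | exact (key a ha le_rfl (by linarith) (by linarith)).trans (by gcongr; linarith)
    | exact (key b hb (by linarith) le_rfl (by linarith)).trans (by gcongr; linarith)
    | exact (key c hc (by linarith) (by linarith) le_rfl).trans (by gcongr; linarith)

/-- Lemma (growth estimate for the monotone rearrangement `φ` of `μ_1` onto `μ_α`,
`α ∈ (0,1)`). -/
theorem rearrangement_growth_estimate (α : ℝ) (hα0 : 0 < α) (hα1 : α < 1)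
    (φ : ℝ → ℝ)
    (hφpos : ∀ x : ℝ, 0 ≤ x → 0 ≤ φ x)
    (hφmono : StrictMonoOn φ (Set.Ici (0 : ℝ)))
    (hφ : ∀ x : ℝ, 0 ≤ x →
      Real.exp (-x) = (Zalpha α)⁻¹ * ∫ y in Set.Ioi (φ x), Real.exp (-y ^ α)) :
    ∃ K > (0 : ℝ), ∀ x y : ℝ, 0 ≤ x → 0 ≤ y →
      |φ x - φ y| ≤
        K * max (max |x - y| (x ^ (1/α - 1) * |x - y|)) (|x - y| ^ (1/α)) := by
  obtain ⟨A, hA, hlog⟩ := exists_rpow_sub_rpow_le_log_expRpowTail hα0 hα1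
  have hq : 1 ≤ 1 / α := by rw [le_div_iff₀ hα0]; linarith
  set q := 1 / α with hq_def
  have hp : 0 ≤ q - 1 := by linarith
  have hZ : 0 < Zalpha α := by
    simpa [expRpowTail] using expRpowTail_pos hα0 0
  have hlogφ : ∀ x : ℝ, 0 ≤ x →
      Real.log (expRpowTail α (φ x)) = Real.log (Zalpha α) - x := by
    intro x hx
    have h := hφ x hx
    rw [← expRpowTail_eq_integral_Ioi hα0 (hφpos x hx)] at h
    have h' : expRpowTail α (φ x) = Zalpha α * Real.exp (-x) := by
      rw [h, mul_inv_cancel_left₀ hZ.ne']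
    rw [h', Real.log_mul hZ.ne' (Real.exp_pos _).ne', Real.log_exp]
    ring
  set ψ : ℝ → ℝ := fun x => (A + φ x) ^ α with hψ_def
  have hψpos : ∀ x : ℝ, 0 ≤ x → 0 < ψ x := fun x hx => by
    have := hφpos x hx
    positivity
  have hψφ : ∀ x : ℝ, 0 ≤ x → ψ x ^ q = A + φ x := by
    intro x hx
    have := hφpos x hx
    rw [hψ_def, hq_def, one_div, Real.rpow_rpow_inv (by positivity) hα0.ne']
  have hψlip : ∀ x y : ℝ, 0 ≤ x → x ≤ y → ψ y - ψ x ≤ 2 * (y - x) := by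
    intro x y hx hxy
    have hy := hx.trans hxy
    have h := hlog (φ x) (φ y) (hφpos x hx) (hφmono.monotoneOn hx hy hxy)
    rw [hlogφ x hx, hlogφ y hy] at h
    simp only [hψ_def]
    linarith
  have hψmono : ∀ x y : ℝ, 0 ≤ x → x ≤ y → ψ x ≤ ψ y := by
    intro x y hx hxy
    have h₀ := hφpos x hx
    have h := hφmono.monotoneOn hx (hx.trans hxy) hxy
    exact Real.rpow_le_rpow (by positivity) (by linarith) hα0.le
  have hgrow : ∀ x y : ℝ, 0 ≤ x → x ≤ y →
      φ y - φ x ≤ 2 * q * (ψ 0 + 2 * y) ^ (q - 1) * (y - x) := by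
    intro x y hx hxy
    have hy := hx.trans hxy
    have h₁ := rpow_sub_rpow_le_mul hq (hψpos x hx).le (hψmono x y hx hxy)
    rw [hψφ x hx, hψφ y hy] at h₁
    have h₂ : ψ y ≤ ψ 0 + 2 * y := by linarith [hψlip 0 y le_rfl hy]
    have h₃ : ψ y ^ (q - 1) ≤ (ψ 0 + 2 * y) ^ (q - 1) :=
      Real.rpow_le_rpow (hψpos y hy).le h₂ hp
    have h₄ := (hψpos 0 le_rfl).le
    have h₅ := hψmono x y hx hxy
    calc φ y - φ x ≤ q * ψ y ^ (q - 1) * (ψ y - ψ x) := by linarith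
      _ ≤ q * (ψ 0 + 2 * y) ^ (q - 1) * (2 * (y - x)) := by
        gcongr
        exact hψlip x y hx hxy
      _ = _ := by ring
  have hψ0 := hψpos 0 le_rfl
  have habs : ∀ x y : ℝ, 0 ≤ x → 0 ≤ y →
      |φ x - φ y| ≤ 2 * q * (ψ 0 + 2 * x + 2 * |x - y|) ^ (q - 1) * |x - y| := by
    intro x y hx hy
    rcases le_total x y with hxy | hxy
    · rw [abs_sub_comm, abs_sub_comm x y,
        abs_of_nonneg (sub_nonneg.2 (hφmono.monotoneOn hx hy hxy)),
        abs_of_nonneg (sub_nonneg.2 hxy)]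
      convert hgrow x y hx hxy using 4
      ring
    · rw [abs_of_nonneg (sub_nonneg.2 (hφmono.monotoneOn hy hx hxy)),
        abs_of_nonneg (sub_nonneg.2 hxy)]
      refine (hgrow y x hy hxy).trans ?_
      have : 0 ≤ x - y := sub_nonneg.2 hxy
      gcongr 2 * q * ?_ * _
      exact Real.rpow_le_rpow (by positivity) (by linarith) hp
  refine ⟨2 * q * 3 ^ (q - 1) * (ψ 0 ^ (q - 1) + 2 ^ (q - 1) + 2 ^ (q - 1)), by positivity,
    fun x y hx hy => (habs x y hx hy).trans ?_⟩
  set d := |x - y|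
  have hd : 0 ≤ d := abs_nonneg _
  set M := max (max d (x ^ (q - 1) * d)) (d ^ q)
  have hM₁ : d ≤ M := (le_max_left _ _).trans (le_max_left _ _)
  have hM₂ : x ^ (q - 1) * d ≤ M := (le_max_right _ _).trans (le_max_left _ _)
  have hM₃ : d ^ (q - 1) * d ≤ M := by
    have : d ^ (q - 1) * d = d ^ q := by
      rw [← Real.rpow_add_one' hd (by linarith), sub_add_cancel]
    exact this.trans_le (le_max_right _ _)
  calc 2 * q * (ψ 0 + 2 * x + 2 * d) ^ (q - 1) * d
      ≤ 2 * q * (3 ^ (q - 1) * (ψ 0 ^ (q - 1) + (2 * x) ^ (q - 1) + (2 * d) ^ (q - 1))) * d := by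
        gcongr
        exact add_add_rpow_le hp hψ0.le (by positivity) (by positivity)
    _ = 2 * q * 3 ^ (q - 1) * (ψ 0 ^ (q - 1) * d + 2 ^ (q - 1) * (x ^ (q - 1) * d) +
          2 ^ (q - 1) * (d ^ (q - 1) * d)) := by
        rw [Real.mul_rpow (by norm_num) hx, Real.mul_rpow (by norm_num) hd]
        ring
    _ ≤ 2 * q * 3 ^ (q - 1) * (ψ 0 ^ (q - 1) * M + 2 ^ (q - 1) * M + 2 ^ (q - 1) * M) := by
        gcongr
    _ = _ := by ring

end
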